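/- arXiv:math/0511507 — 3 statements merged into one kernel-verified Lean document; each statement's English description precedes it below -/
import Mathlib

section
/- For every integer μ ≥ 1 and every q ∈ (0,1], the left-boundary Müller–Wang kernel K1q satisfies the moment conditions ∫_{-1}^{q} K1q(r) dr = 1 and ∫_{-1}^{q} r·K1q(r) dr = 0. -/
open MeasureTheory Set

/-!
On `[a, b]` the weight `w x = (x - a) ^ m * (b - x) ^ n` satisfies the Pearson equation
`(σ w)' = τ w` with `σ x = (x - a) * (b - x)` and `τ x = (m + 1) * (b - x) - (n + 1) * (x - a)`.
Since `σ` vanishes at `a` and `b`, integrating `(σ w f)'` gives `∫ w * (τ * f + σ * f') = 0`.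

On `[-1, q]` the kernel is, up to a constant, `w` times an affine function `ℓ`, where `m = μ` and
`n = μ - 1`. Then `(μ + 1) * r * ℓ r` has the form `τ f + σ f'` with `f` affine, so the first moment
vanishes; and `(2 * μ + 1) * ℓ` is a constant multiple of `τ` plus the constant `μ * (1 + q) ^ 2`,
so the total mass is a multiple of the Beta integral `∫ w`.
-/

theorem integral_ite_mem_Icc {E : Type*} [NormedAddCommGroup E] [NormedSpace ℝ E] {a b : ℝ}
    (hab : a ≤ b) (f : ℝ → E) :
    ∫ x, (if x ∈ Icc a b then f x else 0) = ∫ x in a..b, f x := by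
  calc
    ∫ x, (if x ∈ Icc a b then f x else 0) = ∫ x, (Icc a b).indicator f x := by
      simp only [indicator_apply]
    _ = ∫ x in a..b, f x := by
      rw [integral_indicator measurableSet_Icc, integral_Icc_eq_integral_Ioc,
        intervalIntegral.integral_of_le hab]

section JacobiWeight

variable (a b : ℝ) (m n : ℕ)

theorem hasDerivAt_sub_pow_succ_mul_sub_pow_succ (x : ℝ) :
    HasDerivAt (fun x : ℝ => (x - a) ^ (m + 1) * (b - x) ^ (n + 1))
      ((x - a) ^ m * (b - x) ^ n * ((m + 1) * (b - x) - (n + 1) * (x - a))) x := by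
  have hleft := ((hasDerivAt_id x).sub_const a).pow (m + 1)
  have hright := ((hasDerivAt_id x).const_sub b).pow (n + 1)
  convert! hleft.mul hright using 1
  simp only [id_eq, Pi.pow_apply, Nat.cast_add, Nat.cast_one, Nat.add_sub_cancel]
  ring

theorem integral_sub_pow_mul_sub_pow_mul_pearson_eq_zero {f f' : ℝ → ℝ}
    (hf : ∀ x ∈ uIcc a b, HasDerivAt f (f' x) x) (hf' : IntervalIntegrable f' volume a b) :
    ∫ x in a..b, (x - a) ^ m * (b - x) ^ n *
      (((m + 1) * (b - x) - (n + 1) * (x - a)) * f x + (x - a) * (b - x) * f' x) = 0 := by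
  have hparts := intervalIntegral.integral_deriv_mul_eq_sub
    (fun x _ => hasDerivAt_sub_pow_succ_mul_sub_pow_succ a b m n x) hf
    (Continuous.intervalIntegrable (by fun_prop) a b) hf'
  simp only [sub_self, ne_eq, Nat.add_eq_zero_iff, one_ne_zero, and_false, not_false_eq_true,
    zero_pow, mul_zero, zero_mul] at hparts
  rw [← hparts]
  congr 1
  funext x
  ring

theorem succ_mul_integral_sub_pow_mul_sub_pow_succ :
    ((m : ℝ) + 1) * ∫ x in a..b, (x - a) ^ m * (b - x) ^ (n + 1) =
      ((n : ℝ) + 1) * ∫ x in a..b, (x - a) ^ (m + 1) * (b - x) ^ n := by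
  rw [← sub_eq_zero, ← intervalIntegral.integral_const_mul, ← intervalIntegral.integral_const_mul,
    ← intervalIntegral.integral_sub (Continuous.intervalIntegrable (by fun_prop) _ _)
      (Continuous.intervalIntegrable (by fun_prop) _ _),
    ← integral_sub_pow_mul_sub_pow_mul_pearson_eq_zero a b m n (fun x _ => hasDerivAt_const x 1)
      intervalIntegrable_const]
  congr 1
  funext x
  ring

theorem integral_sub_pow_mul_sub_pow :
    ∫ x in a..b, (x - a) ^ m * (b - x) ^ n =
      (b - a) ^ (m + n + 1) / ((m + n + 1) * (m + n).choose m) := by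
  induction n generalizing m with
  | zero =>
    simp only [pow_zero, mul_one, add_zero, Nat.choose_self, Nat.cast_one, Nat.cast_zero]
    rw [intervalIntegral.integral_comp_sub_right (fun x => x ^ m), integral_pow, sub_self,
      zero_pow m.succ_ne_zero, sub_zero]
  | succ n ih =>
    have hchoose :
        ((m + (n + 1)).choose (m + 1) : ℝ) * (m + 1) = (m + (n + 1)).choose m * (n + 1) := by
      have h := Nat.choose_succ_right_eq (m + (n + 1)) m
      rw [Nat.add_sub_cancel_left] at h
      exact_mod_cast h
    have hchoose_pos : (0 : ℝ) < (m + (n + 1)).choose m := by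
      exact_mod_cast Nat.choose_pos (Nat.le_add_right m (n + 1))
    have hchoose_succ_pos : (0 : ℝ) < (m + (n + 1)).choose (m + 1) := by
      exact_mod_cast Nat.choose_pos (by omega : m + 1 ≤ m + (n + 1))
    have hm : (m : ℝ) + 1 ≠ 0 := by positivity
    apply mul_left_cancel₀ hm
    rw [succ_mul_integral_sub_pow_mul_sub_pow_succ, ih, Nat.add_right_comm m 1 n,
      Nat.add_assoc m n 1]
    push_cast
    rw [mul_div_assoc', mul_div_assoc', div_eq_div_iff (by positivity) (by positivity)]
    linear_combination (-(b - a) ^ (m + (n + 1) + 1) * (m + n + 2)) * hchoose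

end JacobiWeight

/-- The polynomial which the left-boundary Müller–Wang kernel of order `μ` equals on `[-1, q]` up
to its normalising constant `C(μ) * (1 + q) ^ (-(2 * μ + 2))`. -/
def mullerWangProfile (μ : ℕ) (q r : ℝ) : ℝ :=
  (1 + r) ^ μ * (q - r) ^ (μ - 1) *
    (2 * r * ((1 - q) * μ - q) + μ * (1 - q) ^ 2 + 2 * q ^ 2)

theorem integral_mullerWangProfile {μ : ℕ} (hμ : 1 ≤ μ) (q : ℝ) :
    ∫ r in (-1)..q, mullerWangProfile μ q r =
      (1 + q) ^ (2 * μ + 2) / (2 * (2 * μ + 1) * (2 * μ - 1).choose μ) := by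
  obtain ⟨n, rfl⟩ := Nat.exists_eq_add_of_le' hμ
  set w : ℝ → ℝ := fun r => (r - -1) ^ (n + 1) * (q - r) ^ n with hw
  set coeff : ℝ := 2 * ((n + 2) * q - (n + 1)) with hcoeff
  have hpearson := integral_sub_pow_mul_sub_pow_mul_pearson_eq_zero (-1) q (n + 1) n
    (fun r _ => hasDerivAt_const r coeff) intervalIntegrable_const
  have hmass : ∫ r in (-1)..q, w r =
      (1 + q) ^ (2 * n + 2) / ((2 * n + 2) * (2 * n + 1).choose (n + 1)) := by
    rw [hw, integral_sub_pow_mul_sub_pow, show n + 1 + n = 2 * n + 1 by ring]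
    push_cast
    ring
  have hdecomp : (2 * n + 3) * ∫ r in (-1)..q, mullerWangProfile (n + 1) q r =
      (n + 1) * (1 + q) ^ 2 * ∫ r in (-1)..q, w r := by
    rw [← sub_eq_zero, ← intervalIntegral.integral_const_mul,
      ← intervalIntegral.integral_const_mul, ← intervalIntegral.integral_sub, ← hpearson]
    · congr 1
      funext r
      simp only [mullerWangProfile, hw, hcoeff, Nat.add_sub_cancel]
      push_cast
      ring
    · exact Continuous.intervalIntegrable (by unfold mullerWangProfile; fun_prop) _ _
    · exact Continuous.intervalIntegrable (by fun_prop) _ _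
  have hn : (2 * n + 3 : ℝ) ≠ 0 := by positivity
  apply mul_left_cancel₀ hn
  rw [hdecomp, hmass, show 2 * (n + 1) - 1 = 2 * n + 1 by omega]
  push_cast
  field_simp
  ring

theorem integral_id_mul_mullerWangProfile {μ : ℕ} (hμ : 1 ≤ μ) (q : ℝ) :
    ∫ r in (-1)..q, r * mullerWangProfile μ q r = 0 := by
  obtain ⟨n, rfl⟩ := Nat.exists_eq_add_of_le' hμ
  set slope : ℝ := (n + 2) * q - (n + 1) with hslope
  have hpearson := integral_sub_pow_mul_sub_pow_mul_pearson_eq_zero (-1) q (n + 1) n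
    (fun r _ => ((hasDerivAt_id' r).const_mul slope).sub_const q) intervalIntegrable_const
  have hn : (n + 2 : ℝ) ≠ 0 := by positivity
  apply mul_left_cancel₀ hn
  rw [mul_zero, ← intervalIntegral.integral_const_mul, ← hpearson]
  congr 1
  funext r
  simp only [mullerWangProfile, hslope, Nat.add_sub_cancel]
  push_cast
  ring

theorem muller_wang_left_boundary_kernel_moments_general
    (μ : ℕ) (hμ : 1 ≤ μ) (q : ℝ) (hq : -1 < q) (C : ℝ)
    (hC : C = 2 * (2 * (μ : ℝ) + 1) * (Nat.choose (2 * μ - 1) μ : ℝ))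
    (K : ℝ → ℝ)
    (hK : ∀ r : ℝ, K r =
      if r ∈ Set.Icc (-1 : ℝ) q then
        C * (1 + q) ^ (-(2 * (μ : ℝ) + 2)) * (1 + r) ^ μ * (q - r) ^ (μ - 1) *
          (2 * r * ((1 - q) * μ - q) + μ * (1 - q) ^ 2 + 2 * q ^ 2)
      else 0) :
    (∫ r : ℝ, K r) = 1 ∧ (∫ r : ℝ, r * K r) = 0 := by
  have hq' : 0 < 1 + q := by linarith
  have hC_pos : 0 < C := by
    have : 0 < (2 * μ - 1).choose μ := Nat.choose_pos (by omega)
    rw [hC]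
    positivity
  have hpow : (1 + q) ^ (-(2 * (μ : ℝ) + 2)) = ((1 + q) ^ (2 * μ + 2))⁻¹ := by
    rw [Real.rpow_neg hq'.le]
    exact_mod_cast rfl
  have hK_profile : ∀ r, K r = if r ∈ Icc (-1) q then
      C * ((1 + q) ^ (2 * μ + 2))⁻¹ * mullerWangProfile μ q r else 0 := by
    intro r
    rw [hK, hpow, mullerWangProfile]
    simp only [mul_assoc]
  constructor
  · simp only [hK_profile]
    rw [integral_ite_mem_Icc hq.le, intervalIntegral.integral_const_mul,
      integral_mullerWangProfile hμ, ← hC]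
    field_simp
  · simp only [hK_profile, mul_ite, mul_zero, mul_left_comm _ (C * _)]
    rw [integral_ite_mem_Icc hq.le, intervalIntegral.integral_const_mul,
      integral_id_mul_mullerWangProfile hμ, mul_zero]

/-- For every integer μ ≥ 1 and q ∈ (0,1], the left-boundary
Müller–Wang kernel
`K1q(r) = C(μ)·(1+q)^{-(2μ+2)}·(1+r)^μ·(q-r)^{μ-1}·[2r((1-q)μ - q) + μ(1-q)² + 2q²]`
on `[-1,q]` (zero outside), with `C(μ) = 2(2μ+1)·choose(2μ-1, μ)`, satisfies
`∫ K1q = 1` and `∫ r·K1q(r) dr = 0`. -/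
theorem muller_wang_left_boundary_kernel_moments
    (μ : ℕ) (hμ : 1 ≤ μ) (q : ℝ) (hq : q ∈ Set.Ioc (0 : ℝ) 1) (C : ℝ)
    (hC : C = 2 * (2 * (μ : ℝ) + 1) * (Nat.choose (2 * μ - 1) μ : ℝ))
    (K : ℝ → ℝ)
    (hK : ∀ r : ℝ, K r =
      if r ∈ Set.Icc (-1 : ℝ) q then
        C * (1 + q) ^ (-(2 * (μ : ℝ) + 2)) * (1 + r) ^ μ * (q - r) ^ (μ - 1) *
          (2 * r * ((1 - q) * μ - q) + μ * (1 - q) ^ 2 + 2 * q ^ 2)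
      else 0) :
    (∫ r : ℝ, K r) = 1 ∧ (∫ r : ℝ, r * K r) = 0 :=
  muller_wang_left_boundary_kernel_moments_general μ hμ q (by linarith [hq.1]) C hC K hK
end

section
/- Let K : ℝ → ℝ be integrable, vanishing outside [-1,1], with ∫_{ℝ} K(r) dr = 1 and ∫_{ℝ} r·K(r) dr = 0. Let a > 0, x ∈ ℝ, B ≥ 0, and let f : ℝ → ℝ be twice differentiable on [x-a, x+a] with |f''(y)| ≤ B for all y ∈ [x-a, x+a]. Then |∫_{ℝ} K(r)·f(x - r·a) dr − f(x)| ≤ (B·a²/2)·∫_{ℝ} r²·|K(r)| dr. (This is the second-order bias bound underlying Proposition 3.1, r = 2: kernel smoothing of a C² function with a zero-first-moment kernel has bias of order O(a²).) -/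
/-!
Since `K` has mass one and vanishing first moment, averaging against it fixes every affine function.
Hence the bias at `x` is the `K`-average of the remainder of the first-order Taylor expansion of `f`
at `x`, and on the support of `K` this remainder is at most `B * (a * |r|) ^ 2 / 2`. The second
derivative enters only through the mean value inequality `‖f' y - f' x‖ ≤ B * ‖y - x‖`; comparing
`f` along the segment from `x` with a parabola then bounds the remainder.
-/

open MeasureTheory Set

variable {V E : Type*} [NormedAddCommGroup V] [NormedSpace ℝ V] [NormedAddCommGroup E]
  [NormedSpace ℝ E]

theorem norm_image_sub_le_of_norm_deriv_le_mul_sub {γ γ' : ℝ → E} {a b C : ℝ}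
    (hγ : ∀ t ∈ Icc a b, HasDerivWithinAt γ (γ' t) (Icc a b) t)
    (hγ' : ∀ t ∈ Ico a b, ‖γ' t‖ ≤ C * (t - a)) :
    ∀ t ∈ Icc a b, ‖γ t - γ a‖ ≤ C / 2 * (t - a) ^ 2 := by
  have hquad (t : ℝ) : HasDerivAt (fun t ↦ C / 2 * (t - a) ^ 2) (C * (t - a)) t := by
    refine ((((hasDerivAt_id t).sub_const a).fun_pow 2).const_mul (C / 2)).congr_deriv ?_
    simp only [id, Nat.cast_ofNat]
    ring
  exact image_norm_le_of_norm_deriv_right_le_deriv_boundary'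
    (fun t ht ↦ ((hγ t ht).sub_const (γ a)).continuousWithinAt)
    (fun t ht ↦ ((hγ t (Ico_subset_Icc_self ht)).sub_const (γ a)).mono_of_mem_nhdsWithin
      (Icc_mem_nhdsGE_of_mem ht))
    (by simp) (fun t _ ↦ (hquad t).continuousAt.continuousWithinAt)
    (fun t _ ↦ (hquad t).hasDerivWithinAt) hγ'

theorem norm_image_sub_sub_le_of_starConvex {f : V → E} {f' : V → V →L[ℝ] E} {s : Set V} {x y : V}
    {C : ℝ} (hs : StarConvex ℝ x s) (hf : ∀ z ∈ s, HasFDerivWithinAt f (f' z) s z)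
    (hf' : ∀ z ∈ s, ‖f' z - f' x‖ ≤ C * ‖z - x‖) (hy : y ∈ s) :
    ‖f y - f x - f' x (y - x)‖ ≤ C / 2 * ‖y - x‖ ^ 2 := by
  let γ : ℝ → V := AffineMap.lineMap x y
  have hγs : MapsTo γ (Icc 0 1) s := fun t ht ↦
    hs.segment_subset hy (lineMap_mem_segment ℝ x y ht)
  have hsub (t : ℝ) : γ t - x = t • (y - x) := by simp [γ, AffineMap.lineMap_apply]
  have hderiv : ∀ t ∈ Icc (0 : ℝ) 1, HasDerivWithinAt (fun t ↦ f (γ t) - t • f' x (y - x))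
      ((f' (γ t) - f' x) (y - x)) (Icc 0 1) t := fun t ht ↦ by
    have hfγ := (hf _ (hγs ht)).comp_hasDerivWithinAt t AffineMap.hasDerivWithinAt_lineMap hγs
    simpa using hfγ.fun_sub ((hasDerivWithinAt_id t _).smul_const (f' x (y - x)))
  have hbound : ∀ t ∈ Ico (0 : ℝ) 1,
      ‖(f' (γ t) - f' x) (y - x)‖ ≤ C * ‖y - x‖ ^ 2 * (t - 0) := fun t ht ↦
    calc ‖(f' (γ t) - f' x) (y - x)‖
      _ ≤ ‖f' (γ t) - f' x‖ * ‖y - x‖ := ContinuousLinearMap.le_opNorm _ _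
      _ ≤ C * ‖γ t - x‖ * ‖y - x‖ := by
        gcongr
        exact hf' _ (hγs (Ico_subset_Icc_self ht))
      _ = C * ‖y - x‖ ^ 2 * (t - 0) := by
        rw [hsub, norm_smul, Real.norm_of_nonneg ht.1]
        ring
  have hend := norm_image_sub_le_of_norm_deriv_le_mul_sub hderiv hbound 1 (by simp)
  calc ‖f y - f x - f' x (y - x)‖
    _ = ‖f (γ 1) - (1 : ℝ) • f' x (y - x) - (f (γ 0) - (0 : ℝ) • f' x (y - x))‖ := by
      simp [γ, sub_right_comm]
    _ ≤ C / 2 * ‖y - x‖ ^ 2 := hend.trans_eq (by ring)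

theorem mapsTo_sub_smul_closedBall (x : V) {a : ℝ} (ha : 0 ≤ a) :
    MapsTo (fun v ↦ x - a • v) (Metric.closedBall 0 1) (Metric.closedBall x a) := fun v hv ↦ by
  simpa [norm_smul, abs_of_nonneg ha] using
    mul_le_mul_of_nonneg_left (mem_closedBall_zero_iff.1 hv) ha

theorem norm_sub_affine_le_of_mem_closedBall {f : V → E} {f' : V → V →L[ℝ] E} {x v : V} {a B : ℝ}
    (hf : ∀ y ∈ Metric.closedBall x a, HasFDerivWithinAt f (f' y) (Metric.closedBall x a) y)
    (hf' : ∀ y ∈ Metric.closedBall x a, ‖f' y - f' x‖ ≤ B * ‖y - x‖)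
    (ha : 0 ≤ a) (hv : v ∈ Metric.closedBall 0 1) :
    ‖f (x - a • v) - (f x + (-a • f' x) v)‖ ≤ B * a ^ 2 / 2 * ‖v‖ ^ 2 := by
  have hstar : StarConvex ℝ x (Metric.closedBall x a) :=
    (convex_closedBall x a).starConvex (Metric.mem_closedBall_self ha)
  calc ‖f (x - a • v) - (f x + (-a • f' x) v)‖
    _ = ‖f (x - a • v) - f x - f' x (x - a • v - x)‖ := by simp [sub_add_eq_sub_sub]
    _ ≤ B / 2 * ‖x - a • v - x‖ ^ 2 :=
      norm_image_sub_sub_le_of_starConvex hstar hf hf' (mapsTo_sub_smul_closedBall x ha hv)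
    _ = B * a ^ 2 / 2 * ‖v‖ ^ 2 := by
      rw [sub_sub_cancel_left, norm_neg, norm_smul, Real.norm_of_nonneg ha]
      ring

theorem integrable_smul_of_support_subset_isCompact {α : Type*} [MeasurableSpace α]
    [TopologicalSpace α] [OpensMeasurableSpace α] [T2Space α] [SecondCountableTopologyEither α E]
    {μ : Measure α} {K : α → ℝ} {g : α → E} {s : Set α}
    (hK : Integrable K μ) (hKs : Function.support K ⊆ s) (hs : IsCompact s)
    (hg : ContinuousOn g s) : Integrable (fun v ↦ K v • g v) μ :=
  (integrableOn_iff_integrable_of_support_subset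
    ((Function.support_smul_subset_left K g).trans hKs)).1
    (hK.integrableOn.smul_continuousOn hg hs)

section AffineReproduction

variable [CompleteSpace V] [CompleteSpace E] [MeasurableSpace V]

theorem integral_smul_const_add_clm {μ : Measure V} {K : V → ℝ} (hK : Integrable K μ)
    (hKid : Integrable (fun v ↦ K v • v) μ) (c : E) (L : V →L[ℝ] E) :
    ∫ v, K v • (c + L v) ∂μ = (∫ v, K v ∂μ) • c + L (∫ v, K v • v ∂μ) := by
  have hL : Integrable (fun v ↦ K v • L v) μ := by simpa using L.integrable_comp hKid
  simp_rw [smul_add]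
  rw [integral_add (hK.smul_const c) hL, integral_smul_const, ← L.integral_comp_comm hKid]
  simp_rw [map_smul]

theorem norm_integral_smul_sub_le_of_norm_sub_affine_le {μ : Measure V} {K w : V → ℝ} {g : V → E}
    {c : E} {L : V →L[ℝ] E} (hK : Integrable K μ) (hKid : Integrable (fun v ↦ K v • v) μ)
    (hKg : Integrable (fun v ↦ K v • g v) μ) (hKw : Integrable (fun v ↦ w v * |K v|) μ)
    (hKone : ∫ v, K v ∂μ = 1) (hKfirst : ∫ v, K v • v ∂μ = 0)
    (hg : ∀ v ∈ Function.support K, ‖g v - (c + L v)‖ ≤ w v) :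
    ‖(∫ v, K v • g v ∂μ) - c‖ ≤ ∫ v, w v * |K v| ∂μ := by
  have hKaffine : Integrable (fun v ↦ K v • (c + L v)) μ := by
    simpa [smul_add] using! (hK.smul_const c).add (L.integrable_comp hKid)
  have hmean : ∫ v, K v • (c + L v) ∂μ = c := by
    rw [integral_smul_const_add_clm hK hKid, hKone, hKfirst, one_smul, map_zero, add_zero]
  have hbias : (∫ v, K v • g v ∂μ) - c = ∫ v, K v • (g v - (c + L v)) ∂μ := by
    simp_rw [smul_sub]
    rw [integral_sub hKg hKaffine, hmean]
  rw [hbias]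
  refine norm_integral_le_of_norm_le hKw (.of_forall fun v ↦ ?_)
  rw [norm_smul, Real.norm_eq_abs, mul_comm]
  obtain hv | hv := eq_or_ne (K v) 0
  · simp [hv]
  · gcongr
    exact hg v hv

end AffineReproduction

theorem kernel_smoothing_bias_second_order_general [CompleteSpace E] [FiniteDimensional ℝ V]
    [MeasurableSpace V] [OpensMeasurableSpace V] {μ : Measure V} {K : V → ℝ} {f : V → E}
    {f' : V → V →L[ℝ] E} {x : V} {a B : ℝ} (hK : Integrable K μ)
    (hKsupp : Function.support K ⊆ Metric.closedBall 0 1)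
    (hKone : ∫ v, K v ∂μ = 1) (hKfirst : ∫ v, K v • v ∂μ = 0) (ha : 0 ≤ a)
    (hf : ∀ y ∈ Metric.closedBall x a, HasFDerivWithinAt f (f' y) (Metric.closedBall x a) y)
    (hf' : ∀ y ∈ Metric.closedBall x a, ‖f' y - f' x‖ ≤ B * ‖y - x‖) :
    ‖(∫ v, K v • f (x - a • v) ∂μ) - f x‖ ≤ B * a ^ 2 / 2 * ∫ v, ‖v‖ ^ 2 * |K v| ∂μ := by
  have hball : IsCompact (Metric.closedBall (0 : V) 1) := isCompact_closedBall 0 1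
  have hKid : Integrable (fun v ↦ K v • v) μ :=
    integrable_smul_of_support_subset_isCompact hK hKsupp hball continuousOn_id
  have hKf : Integrable (fun v ↦ K v • f (x - a • v)) μ :=
    integrable_smul_of_support_subset_isCompact hK hKsupp hball <|
      ContinuousOn.comp (fun y hy ↦ (hf y hy).continuousWithinAt) (by fun_prop)
        (mapsTo_sub_smul_closedBall x ha)
  have hKsq : Integrable (fun v ↦ B * a ^ 2 / 2 * ‖v‖ ^ 2 * |K v|) μ :=
    (integrable_smul_of_support_subset_isCompact hK.abs
      ((Function.support_comp_subset abs_zero K).trans hKsupp) hball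
      (by fun_prop)).congr (.of_forall fun v ↦ mul_comm _ _)
  simpa only [mul_assoc, integral_const_mul] using
    norm_integral_smul_sub_le_of_norm_sub_affine_le hK hKid hKf hKsq hKone hKfirst fun v hv ↦
      norm_sub_affine_le_of_mem_closedBall hf hf' ha (hKsupp hv)

/-- Second-order kernel-smoothing bias bound (Proposition 3.1, r = 2).
If `K` is integrable, vanishes outside `[-1,1]`, integrates to `1` and has zero
first moment, and `f` is twice differentiable on `[x-a, x+a]` with `|f''| ≤ B`
there, then `|∫ K(r)·f(x - r·a) dr − f(x)| ≤ (B·a²/2)·∫ r²·|K(r)| dr`. -/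
theorem kernel_smoothing_bias_second_order
    (K : ℝ → ℝ) (hKint : Integrable K)
    (hKsupp : ∀ r : ℝ, r ∉ Set.Icc (-1 : ℝ) 1 → K r = 0)
    (hKone : (∫ r : ℝ, K r) = 1)
    (hKfirst : (∫ r : ℝ, r * K r) = 0)
    (a : ℝ) (ha : 0 < a) (x : ℝ) (B : ℝ) (hB : 0 ≤ B)
    (f f' f'' : ℝ → ℝ)
    (hf' : ∀ y ∈ Set.Icc (x - a) (x + a), HasDerivAt f (f' y) y)
    (hf'' : ∀ y ∈ Set.Icc (x - a) (x + a), HasDerivAt f' (f'' y) y)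
    (hbdd : ∀ y ∈ Set.Icc (x - a) (x + a), |f'' y| ≤ B) :
    |(∫ r : ℝ, K r * f (x - r * a)) - f x| ≤
      B * a ^ 2 / 2 * ∫ r : ℝ, r ^ 2 * |K r| := by
  have hx : x ∈ Icc (x - a) (x + a) := ⟨by linarith, by linarith⟩
  have hLip : ∀ y ∈ Icc (x - a) (x + a), ‖f' y - f' x‖ ≤ B * ‖y - x‖ := fun y hy ↦
    (convex_Icc _ _).norm_image_sub_le_of_norm_hasDerivWithin_le
      (fun z hz ↦ (hf'' z hz).hasDerivWithinAt) hbdd hx hy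
  rw [← Real.closedBall_eq_Icc] at hf' hLip
  have hsupp : Function.support K ⊆ Metric.closedBall 0 1 := by
    simpa only [Real.closedBall_eq_Icc, zero_sub, zero_add, Function.support_subset_iff']
      using hKsupp
  simpa [mul_comm] using kernel_smoothing_bias_second_order_general
    (f' := fun y ↦ ContinuousLinearMap.toSpanSingletonLIE ℝ ℝ (f' y)) hKint hsupp hKone
    (by simpa [mul_comm] using hKfirst) ha.le
    (fun y hy ↦ (hf' y hy).hasFDerivAt.hasFDerivWithinAt)
    (fun y hy ↦ by simpa only [← map_sub, LinearIsometryEquiv.norm_map] using hLip y hy)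
end

section
/- Let T be a nonnegative real random variable and J a random variable with values in {1,2}, defined on a common probability space. Let α₁, α₂ : [0,∞) → [0,∞) be measurable with ∫₀^t (α₁(u)+α₂(u)) du < ∞ for every t ≥ 0, and suppose: (a) P(T > t) = exp(−∫₀^t (α₁(u)+α₂(u)) du) for all t ≥ 0, and (b) for j = 1,2 and every bounded measurable ψ : [0,∞) → ℝ, E[ψ(T)·1{J = j}] = ∫₀^∞ ψ(u)·α_j(u)·P(T ≥ u) du (α₁, α₂ are the cause-specific hazards). For a bounded measurable φ : [0,∞) → ℝ and j ∈ {1,2} define M_j(φ) = φ(T)·1{J = j} − ∫₀^T φ(u)·α_j(u) du. Then for all bounded measurable φ₁, φ₂ : [0,∞) → ℝ, E[M₁(φ₁)·M₂(φ₂)] = 0. (This is the two-type instance of the orthogonality identity of Lemma 2.1: martingale integrals associated with distinct transition types are uncorrelated.) -/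
open MeasureTheory ProbabilityTheory Set

/-!
Write `S(u) = P(T ≥ u)` and `A_j = ∫₀^· φ_j α_j`. Because the two events are disjoint, the product
of the two martingale integrals is itself a sum of such integrals:
integration by parts `A₁ A₂ = ∫₀^· A₂ dA₁ + ∫₀^· A₁ dA₂` yields the pointwise identity
`M₁(φ₁) M₂(φ₂) = -(M₁(φ₁ A₂) + M₂(φ₂ A₁))`.
Each term on the right has mean zero: the law of `T` on `{J = j}` has density `α_j S`, so
`E[g(T) 1{J = j}] = ∫ g α_j S`, and by Fubini also `E[∫₀^T g α_j] = ∫ g α_j S`.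

The integrands `φ₁ A₂` and `φ₂ A₁` need not be bounded, but `A_j(T)` is integrable by Fubini because
`α_j S`, being the density of a finite measure, is integrable.
-/

/-! ### Primitives -/

/-- The primitive `t ↦ ∫₀^t f`, written with `Icc` and hence equal to `0` for negative `t`. -/
noncomputable def primitive (f : ℝ → ℝ) (t : ℝ) : ℝ := ∫ u in Icc (0 : ℝ) t, f u

section Primitive

variable {f g : ℝ → ℝ}

lemma primitive_eq_intervalIntegral {t : ℝ} (ht : 0 ≤ t) : primitive f t = ∫ u in 0..t, f u := by
  rw [primitive, integral_Icc_eq_integral_Ioc, intervalIntegral.integral_of_le ht]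

lemma primitive_of_neg {t : ℝ} (ht : t < 0) : primitive f t = 0 := by
  simp [primitive, Icc_eq_empty ht.not_ge]

lemma primitive_eq_integral_indicator_Iic (f : ℝ → ℝ) (t : ℝ) :
    primitive f t = ∫ u in Ici (0 : ℝ), (Iic t).indicator f u := by
  rw [setIntegral_indicator measurableSet_Iic, Ici_inter_Iic, primitive]

lemma measurable_uncurry_indicator_Iic {Ω : Type*} [MeasurableSpace Ω] {T : Ω → ℝ}
    (hT : Measurable T) (hf : Measurable f) :
    Measurable (Function.uncurry fun ω u => (Iic (T ω)).indicator f u) :=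
  (hf.comp measurable_snd).indicator (s := {p : Ω × ℝ | p.2 ≤ T p.1})
    (measurableSet_le measurable_snd (hT.comp measurable_fst))

lemma measurable_primitive (hf : Measurable f) : Measurable (primitive f) := by
  simp only [funext (primitive_eq_integral_indicator_Iic f)]
  exact (measurable_uncurry_indicator_Iic measurable_id
    hf).stronglyMeasurable.integral_prod_right.measurable

lemma integrableOn_Icc_left_of_add (hf : Measurable f) (hf_nonneg : ∀ u, 0 ≤ u → 0 ≤ f u)
    (hg_nonneg : ∀ u, 0 ≤ u → 0 ≤ g u)
    (hfg : ∀ t : ℝ, 0 ≤ t → IntegrableOn (fun u => f u + g u) (Icc 0 t)) (t : ℝ) :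
    IntegrableOn f (Icc 0 t) := by
  rcases lt_or_ge t 0 with ht | ht
  · simp [Icc_eq_empty ht.not_ge]
  have hIcc : ∀ᵐ u ∂volume.restrict (Icc 0 t), 0 ≤ u :=
    (ae_restrict_mem measurableSet_Icc).mono fun u hu => hu.1
  exact integrable_left_of_integrable_add_of_nonneg hf.aestronglyMeasurable
    (hIcc.mono hf_nonneg) (hIcc.mono hg_nonneg) (hfg t ht)

lemma integrableOn_Icc_mul_primitive {t : ℝ} (hf : IntegrableOn f (Icc 0 t))
    (hg : IntegrableOn g (Icc 0 t)) : IntegrableOn (fun u => f u * primitive g u) (Icc 0 t) :=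
  hf.mul_continuousOn (intervalIntegral.continuousOn_primitive_Icc hg) isCompact_Icc

lemma intervalIntegral_mul_intervalIntegral {a b : ℝ} (hf : IntervalIntegrable f volume a b)
    (hg : IntervalIntegrable g volume a b) :
    (∫ u in a..b, f u) * ∫ u in a..b, g u =
      ∫ u in a..b, (f u * (∫ v in a..u, g v) + g u * ∫ v in a..u, f v) := by
  have hF := hf.absolutelyContinuousOnInterval_intervalIntegral left_mem_uIcc
  have hG := hg.absolutelyContinuousOnInterval_intervalIntegral left_mem_uIcc
  have hparts := hF.integral_deriv_mul_eq_sub hG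
  simp only [intervalIntegral.integral_same, mul_zero, sub_zero] at hparts
  rw [← hparts]
  apply intervalIntegral.integral_congr_ae
  filter_upwards [hf.ae_hasDerivAt_integral, hg.ae_hasDerivAt_integral] with u hFu hGu hu
  have hu := uIoc_subset_uIcc hu
  rw [(hFu hu a left_mem_uIcc).deriv, (hGu hu a left_mem_uIcc).deriv]
  ring

lemma primitive_mul_primitive {t : ℝ} (hf : IntegrableOn f (Icc 0 t))
    (hg : IntegrableOn g (Icc 0 t)) :
    primitive f t * primitive g t =
      primitive (fun u => f u * primitive g u) t + primitive (fun u => g u * primitive f u) t := by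
  rcases lt_or_ge t 0 with ht | ht
  · simp [primitive_of_neg ht]
  calc primitive f t * primitive g t
      = ∫ u in 0..t, (f u * (∫ v in 0..u, g v) + g u * ∫ v in 0..u, f v) := by
        rw [primitive_eq_intervalIntegral ht, primitive_eq_intervalIntegral ht]
        exact intervalIntegral_mul_intervalIntegral
          ((intervalIntegrable_iff_integrableOn_Icc_of_le ht).2 hf)
          ((intervalIntegrable_iff_integrableOn_Icc_of_le ht).2 hg)
    _ = primitive (fun u => f u * primitive g u + g u * primitive f u) t := by
        rw [primitive_eq_intervalIntegral ht]
        refine intervalIntegral.integral_congr fun u hu => ?_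
        have hu : 0 ≤ u := (uIcc_of_le ht ▸ hu).1
        simp only [primitive_eq_intervalIntegral hu]
    _ = _ := integral_add (integrableOn_Icc_mul_primitive hf hg)
        (integrableOn_Icc_mul_primitive hg hf)

end Primitive

/-! ### The survival function -/

/-- The left-continuous survival function `u ↦ P(T ≥ u)`. -/
noncomputable def survival {Ω : Type*} [MeasurableSpace Ω] (μ : Measure Ω) (T : Ω → ℝ) (u : ℝ) :
    ℝ :=
  μ.real {ω | u ≤ T ω}

section Survival

variable {Ω : Type*} [MeasurableSpace Ω] {μ : Measure Ω} {T : Ω → ℝ} {f : ℝ → ℝ}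

lemma survival_nonneg (u : ℝ) : 0 ≤ survival μ T u := measureReal_nonneg

lemma integral_indicator_Iic_comp (hT : Measurable T) (f : ℝ → ℝ) (u : ℝ) :
    ∫ ω, (Iic (T ω)).indicator f u ∂μ = f u * survival μ T u := by
  rw [mul_comm]
  exact integral_indicator_const (f u) (measurableSet_le measurable_const hT)

variable [IsFiniteMeasure μ]

lemma survival_le_measureReal_univ (u : ℝ) : survival μ T u ≤ μ.real univ :=
  measureReal_mono (subset_univ _)

lemma antitone_survival : Antitone (survival μ T) := fun _ _ huv =>
  measureReal_mono fun _ hω => huv.trans hω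

lemma measurable_survival : Measurable (survival μ T) := antitone_survival.measurable

lemma integrableOn_mul_survival_of_integrableOn {s : Set ℝ} (hf : IntegrableOn f s) :
    IntegrableOn (fun u => f u * survival μ T u) s :=
  hf.mul_bdd measurable_survival.aestronglyMeasurable (.of_forall fun u => by
    rw [Real.norm_of_nonneg (survival_nonneg u)]
    exact survival_le_measureReal_univ u)

lemma integrable_uncurry_indicator_Iic (hT : Measurable T) (hf : Measurable f)
    (hfS : IntegrableOn (fun u => f u * survival μ T u) (Ici 0)) :
    Integrable (Function.uncurry fun ω u => (Iic (T ω)).indicator f u)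
      (μ.prod (volume.restrict (Ici 0))) := by
  rw [integrable_prod_iff' (measurable_uncurry_indicator_Iic hT hf).aestronglyMeasurable]
  refine ⟨.of_forall fun u => ?_, hfS.norm.congr (.of_forall fun u => ?_)⟩
  · exact (integrable_const (f u)).indicator (measurableSet_le measurable_const hT)
  · simp only [Function.uncurry_apply_pair, norm_indicator_eq_indicator_norm, norm_mul,
      integral_indicator_Iic_comp hT, Real.norm_of_nonneg (survival_nonneg u)]

lemma integrable_primitive_comp (hT : Measurable T) (hf : Measurable f)
    (hfS : IntegrableOn (fun u => f u * survival μ T u) (Ici 0)) :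
    Integrable (fun ω => primitive f (T ω)) μ := by
  simp only [primitive_eq_integral_indicator_Iic]
  exact (integrable_uncurry_indicator_Iic hT hf hfS).integral_prod_left

lemma integral_primitive_comp (hT : Measurable T) (hf : Measurable f)
    (hfS : IntegrableOn (fun u => f u * survival μ T u) (Ici 0)) :
    ∫ ω, primitive f (T ω) ∂μ = ∫ u in Ici (0 : ℝ), f u * survival μ T u := by
  simp only [primitive_eq_integral_indicator_Iic]
  rw [integral_integral_swap (integrable_uncurry_indicator_Iic hT hf hfS)]
  simp only [integral_indicator_Iic_comp hT]

end Survival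

/-! ### Cause-specific hazards -/

/-- `α` is the cause-specific hazard of the event time `T` on the event `E = {J = j}`: it is
nonnegative and locally integrable on `[0, ∞)`, and the law of `T` on `E` has density
`u ↦ α(u) P(T ≥ u)` on `[0, ∞)`. -/
structure HasCauseSpecificHazard {Ω : Type*} [MeasurableSpace Ω] (μ : Measure Ω) (T : Ω → ℝ)
    (E : Set Ω) (α : ℝ → ℝ) : Prop where
  measurable : Measurable α
  nonneg : ∀ u, 0 ≤ u → 0 ≤ α u
  integrableOn_Icc : ∀ t, IntegrableOn α (Icc 0 t)
  map_restrict_eq : (μ.restrict E).map T =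
    (volume.restrict (Ici 0)).withDensity fun u => ENNReal.ofReal (α u * survival μ T u)

/-- The martingale integral `M_j(φ) = φ(T) 1{J = j} - ∫₀^T φ α_j` for the event `E = {J = j}` and
the hazard `α = α_j`. -/
noncomputable def hazardMartingale {Ω : Type*} (T : Ω → ℝ) (E : Set Ω) (α φ : ℝ → ℝ) (ω : Ω) : ℝ :=
  E.indicator (fun ω => φ (T ω)) ω - primitive (fun u => φ u * α u) (T ω)

namespace HasCauseSpecificHazard

variable {Ω : Type*} [MeasurableSpace Ω] {μ : Measure Ω} {T : Ω → ℝ} {E : Set Ω} {α : ℝ → ℝ}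

lemma toReal_density_smul_ae_eq (h : HasCauseSpecificHazard μ T E α) (g : ℝ → ℝ) :
    (fun u => (ENNReal.ofReal (α u * survival μ T u)).toReal • g u)
      =ᵐ[volume.restrict (Ici 0)] fun u => g u * α u * survival μ T u := by
  filter_upwards [ae_restrict_mem measurableSet_Ici] with u hu
  rw [ENNReal.toReal_ofReal (mul_nonneg (h.nonneg u hu) (survival_nonneg u)), smul_eq_mul]
  ring

variable [IsFiniteMeasure μ]

lemma measurable_mul_survival (h : HasCauseSpecificHazard μ T E α) :
    Measurable fun u => α u * survival μ T u :=
  h.measurable.mul measurable_survival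

lemma of_cumulativeIncidence_eq (hT : Measurable T) (hα : Measurable α)
    (hα_nonneg : ∀ u, 0 ≤ u → 0 ≤ α u) (hα_int : ∀ t, IntegrableOn α (Icc 0 t))
    (h : ∀ a, μ.real (T ⁻¹' Iic a ∩ E) = ∫ u in Icc 0 a, α u * survival μ T u) :
    HasCauseSpecificHazard μ T E α where
  measurable := hα
  nonneg := hα_nonneg
  integrableOn_Icc := hα_int
  map_restrict_eq := by
    -- Half-lines suffice, and on them `α S` is integrable because `α` is locally integrable.
    refine Measure.ext_of_Iic _ _ fun a => ?_
    rw [Measure.map_apply hT measurableSet_Iic, Measure.restrict_apply (hT measurableSet_Iic),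
      withDensity_apply _ measurableSet_Iic, Measure.restrict_restrict measurableSet_Iic,
      Iic_inter_Ici, ← ofReal_measureReal, h,
      ofReal_integral_eq_lintegral_ofReal (integrableOn_mul_survival_of_integrableOn (hα_int a))]
    filter_upwards [ae_restrict_mem measurableSet_Icc] with u hu
    exact mul_nonneg (hα_nonneg u hu.1) (survival_nonneg u)

lemma of_integral_ite_eq {p : Ω → Prop} [DecidablePred p] (hp : MeasurableSet {ω | p ω})
    (hT : Measurable T) (hα : Measurable α)
    (hα_nonneg : ∀ u, 0 ≤ u → 0 ≤ α u) (hα_int : ∀ t, IntegrableOn α (Icc 0 t))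
    (h : ∀ ψ : ℝ → ℝ, Measurable ψ → (∃ M : ℝ, ∀ u : ℝ, |ψ u| ≤ M) →
      ∫ ω, (if p ω then ψ (T ω) else 0) ∂μ = ∫ u in Ici (0 : ℝ), ψ u * α u * survival μ T u) :
    HasCauseSpecificHazard μ T {ω | p ω} α := by
  refine .of_cumulativeIncidence_eq hT hα hα_nonneg hα_int fun a => ?_
  have hψ := h ((Iic a).indicator 1) (measurable_one.indicator measurableSet_Iic)
    ⟨1, fun u => by by_cases hu : u ≤ a <;> simp [hu]⟩
  calc μ.real (T ⁻¹' Iic a ∩ {ω | p ω})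
      = ∫ ω, (if p ω then (Iic a).indicator 1 (T ω) else 0) ∂μ := by
        rw [← integral_indicator_one ((hT measurableSet_Iic).inter hp)]
        congr 1 with ω
        by_cases hω : p ω <;> by_cases hu : T ω ≤ a <;> simp [hω, hu]
    _ = ∫ u in Ici (0 : ℝ), (Iic a).indicator (fun u => α u * survival μ T u) u := by
        rw [hψ]
        congr 1 with u
        by_cases hu : u ≤ a <;> simp [hu]
    _ = ∫ u in Icc 0 a, α u * survival μ T u := (primitive_eq_integral_indicator_Iic _ a).symm

lemma integrableOn_mul_survival (h : HasCauseSpecificHazard μ T E α) :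
    IntegrableOn (fun u => α u * survival μ T u) (Ici 0) := by
  refine ⟨h.measurable_mul_survival.aestronglyMeasurable, ?_⟩
  rw [hasFiniteIntegral_iff_ofReal]
  · rw [← setLIntegral_univ, ← withDensity_apply _ .univ, ← h.map_restrict_eq]
    exact measure_lt_top _ _
  · filter_upwards [ae_restrict_mem measurableSet_Ici] with u hu
    exact mul_nonneg (h.nonneg u hu) (survival_nonneg u)

lemma integrableOn_comp_iff (h : HasCauseSpecificHazard μ T E α) (hT : Measurable T)
    {g : ℝ → ℝ} (hg : Measurable g) :
    IntegrableOn (fun ω => g (T ω)) E μ ↔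
      IntegrableOn (fun u => g u * α u * survival μ T u) (Ici 0) := by
  have hmap : Integrable g ((μ.restrict E).map T) ↔ IntegrableOn (fun ω => g (T ω)) E μ :=
    integrable_map_measure hg.aestronglyMeasurable hT.aemeasurable
  rw [← hmap, h.map_restrict_eq, integrable_withDensity_iff_integrable_smul'
    h.measurable_mul_survival.ennreal_ofReal (.of_forall fun _ => ENNReal.ofReal_lt_top)]
  exact integrable_congr (h.toReal_density_smul_ae_eq g)

lemma setIntegral_comp (h : HasCauseSpecificHazard μ T E α) (hT : Measurable T)
    {g : ℝ → ℝ} (hg : Measurable g) :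
    ∫ ω in E, g (T ω) ∂μ = ∫ u in Ici (0 : ℝ), g u * α u * survival μ T u := by
  rw [← integral_map hT.aemeasurable hg.aestronglyMeasurable, h.map_restrict_eq,
    integral_withDensity_eq_integral_toReal_smul
      h.measurable_mul_survival.ennreal_ofReal (.of_forall fun _ => ENNReal.ofReal_lt_top)]
  exact integral_congr_ae (h.toReal_density_smul_ae_eq g)

lemma integrable_hazardMartingale (h : HasCauseSpecificHazard μ T E α) (hT : Measurable T)
    (hE : MeasurableSet E) {g : ℝ → ℝ} (hg : Measurable g)
    (hgT : IntegrableOn (fun ω => g (T ω)) E μ) : Integrable (hazardMartingale T E α g) μ :=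
  (hgT.integrable_indicator hE).sub <|
    integrable_primitive_comp hT (hg.mul h.measurable) ((h.integrableOn_comp_iff hT hg).1 hgT)

lemma integral_hazardMartingale (h : HasCauseSpecificHazard μ T E α) (hT : Measurable T)
    (hE : MeasurableSet E) {g : ℝ → ℝ} (hg : Measurable g)
    (hgT : IntegrableOn (fun ω => g (T ω)) E μ) : ∫ ω, hazardMartingale T E α g ω ∂μ = 0 := by
  have hgS := (h.integrableOn_comp_iff hT hg).1 hgT
  have hgα : Measurable fun u => g u * α u := hg.mul h.measurable
  calc ∫ ω, hazardMartingale T E α g ω ∂μ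
      = (∫ ω in E, g (T ω) ∂μ) - ∫ ω, primitive (fun u => g u * α u) (T ω) ∂μ := by
        rw [← integral_indicator hE]
        exact integral_sub (hgT.integrable_indicator hE) (integrable_primitive_comp hT hgα hgS)
    _ = 0 := by
        rw [h.setIntegral_comp hT hg, integral_primitive_comp hT hgα hgS, sub_self]

lemma integrable_mul_primitive_comp (h : HasCauseSpecificHazard μ T E α) (hT : Measurable T)
    {φ ψ : ℝ → ℝ} {C M : ℝ} (hφ : Measurable φ) (hφC : ∀ u, |φ u| ≤ C)
    (hψ : Measurable ψ) (hψM : ∀ u, |ψ u| ≤ M) :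
    Integrable (fun ω => ψ (T ω) * primitive (fun u => φ u * α u) (T ω)) μ := by
  have hφS : IntegrableOn (fun u => φ u * α u * survival μ T u) (Ici 0) := by
    simp only [mul_assoc]
    exact h.integrableOn_mul_survival.bdd_mul hφ.aestronglyMeasurable (.of_forall hφC)
  exact (integrable_primitive_comp hT (hφ.mul h.measurable) hφS).bdd_mul
    (hψ.comp hT).aestronglyMeasurable (.of_forall fun ω => hψM (T ω))

end HasCauseSpecificHazard

/-! ### Orthogonality -/

lemma hazardMartingale_mul_hazardMartingale {Ω : Type*} {T : Ω → ℝ} {E₁ E₂ : Set Ω}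
    (hE : Disjoint E₁ E₂) {α₁ α₂ φ₁ φ₂ : ℝ → ℝ} {ω : Ω}
    (h₁ : IntegrableOn (fun u => φ₁ u * α₁ u) (Icc 0 (T ω)))
    (h₂ : IntegrableOn (fun u => φ₂ u * α₂ u) (Icc 0 (T ω))) :
    hazardMartingale T E₁ α₁ φ₁ ω * hazardMartingale T E₂ α₂ φ₂ ω =
      -(hazardMartingale T E₁ α₁ (fun u => φ₁ u * primitive (fun v => φ₂ v * α₂ v) u) ω
        + hazardMartingale T E₂ α₂ (fun u => φ₂ u * primitive (fun v => φ₁ v * α₁ v) u) ω) := by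
  have hparts := primitive_mul_primitive h₁ h₂
  simp only [hazardMartingale, mul_right_comm _ (primitive _ _)]
  by_cases hω₁ : ω ∈ E₁
  · have hω₂ : ω ∉ E₂ := disjoint_left.1 hE hω₁
    simp only [indicator_of_mem hω₁, indicator_of_notMem hω₂]
    linear_combination hparts
  · by_cases hω₂ : ω ∈ E₂
    · simp only [indicator_of_notMem hω₁, indicator_of_mem hω₂]
      linear_combination hparts
    · simp only [indicator_of_notMem hω₁, indicator_of_notMem hω₂]
      linear_combination hparts

theorem competing_risks_martingales_orthogonal_general {Ω : Type*} [MeasurableSpace Ω]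
    {μ : Measure Ω} [IsFiniteMeasure μ] {T : Ω → ℝ} (hT : Measurable T) {E₁ E₂ : Set Ω}
    (hE₁ : MeasurableSet E₁) (hE₂ : MeasurableSet E₂) (hE : Disjoint E₁ E₂) {α₁ α₂ : ℝ → ℝ}
    (h₁ : HasCauseSpecificHazard μ T E₁ α₁) (h₂ : HasCauseSpecificHazard μ T E₂ α₂)
    {φ₁ φ₂ : ℝ → ℝ} (hφ₁ : Measurable φ₁) (hφ₂ : Measurable φ₂)
    {M₁ M₂ : ℝ} (hφ₁M : ∀ u, |φ₁ u| ≤ M₁) (hφ₂M : ∀ u, |φ₂ u| ≤ M₂) :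
    ∫ ω, hazardMartingale T E₁ α₁ φ₁ ω * hazardMartingale T E₂ α₂ φ₂ ω ∂μ = 0 := by
  set g₁ : ℝ → ℝ := fun u => φ₁ u * primitive (fun v => φ₂ v * α₂ v) u
  set g₂ : ℝ → ℝ := fun u => φ₂ u * primitive (fun v => φ₁ v * α₁ v) u
  have hg₁ : Measurable g₁ := hφ₁.mul (measurable_primitive (hφ₂.mul h₂.measurable))
  have hg₂ : Measurable g₂ := hφ₂.mul (measurable_primitive (hφ₁.mul h₁.measurable))
  have hg₁T : IntegrableOn (fun ω => g₁ (T ω)) E₁ μ :=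
    (h₂.integrable_mul_primitive_comp hT hφ₂ hφ₂M hφ₁ hφ₁M).integrableOn
  have hg₂T : IntegrableOn (fun ω => g₂ (T ω)) E₂ μ :=
    (h₁.integrable_mul_primitive_comp hT hφ₁ hφ₁M hφ₂ hφ₂M).integrableOn
  have hprod (ω : Ω) : hazardMartingale T E₁ α₁ φ₁ ω * hazardMartingale T E₂ α₂ φ₂ ω =
      -(hazardMartingale T E₁ α₁ g₁ ω + hazardMartingale T E₂ α₂ g₂ ω) :=
    hazardMartingale_mul_hazardMartingale hE
      ((h₁.integrableOn_Icc (T ω)).bdd_mul hφ₁.aestronglyMeasurable (.of_forall hφ₁M))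
      ((h₂.integrableOn_Icc (T ω)).bdd_mul hφ₂.aestronglyMeasurable (.of_forall hφ₂M))
  simp only [hprod]
  rw [integral_neg, integral_add (h₁.integrable_hazardMartingale hT hE₁ hg₁ hg₁T)
      (h₂.integrable_hazardMartingale hT hE₂ hg₂ hg₂T),
    h₁.integral_hazardMartingale hT hE₁ hg₁ hg₁T, h₂.integral_hazardMartingale hT hE₂ hg₂ hg₂T,
    add_zero, neg_zero]

/-- Two-type instance of the orthogonality identity of Lemma 2.1.
With `T` a nonnegative event time, `J ∈ {1,2}` the event type, `α₁`, `α₂` the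
cause-specific hazards (assumptions (a) and (b)), and
`M_j(φ) = φ(T)·1{J = j} − ∫₀^T φ·α_j`, the martingale integrals associated with
distinct transition types are uncorrelated: `E[M₁(φ₁)·M₂(φ₂)] = 0`. -/
theorem competing_risks_martingales_orthogonal
    {Ω : Type*} [MeasurableSpace Ω] (μ : Measure Ω) [IsProbabilityMeasure μ]
    (T : Ω → ℝ) (hTmeas : Measurable T) (hTpos : ∀ ω, 0 ≤ T ω)
    (J : Ω → ℕ) (hJmeas : Measurable J) (hJval : ∀ ω, J ω = 1 ∨ J ω = 2)
    (α₁ α₂ : ℝ → ℝ) (hα₁_meas : Measurable α₁) (hα₂_meas : Measurable α₂)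
    (hα₁_nonneg : ∀ u : ℝ, 0 ≤ u → 0 ≤ α₁ u)
    (hα₂_nonneg : ∀ u : ℝ, 0 ≤ u → 0 ≤ α₂ u)
    (hα_int : ∀ t : ℝ, 0 ≤ t → IntegrableOn (fun u => α₁ u + α₂ u) (Set.Icc 0 t))
    -- (a): the survival function of `T` has hazard `α₁ + α₂`
    (hsurv : ∀ t : ℝ, 0 ≤ t →
      (μ {ω | t < T ω}).toReal =
        Real.exp (-∫ u in Set.Icc (0 : ℝ) t, (α₁ u + α₂ u)))
    -- (b): `α₁`, `α₂` are the cause-specific hazards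
    (hcause₁ : ∀ ψ : ℝ → ℝ, Measurable ψ → (∃ Mψ : ℝ, ∀ u : ℝ, |ψ u| ≤ Mψ) →
      (∫ ω, (if J ω = 1 then ψ (T ω) else 0) ∂μ) =
        ∫ u in Set.Ici (0 : ℝ), ψ u * α₁ u * (μ {ω | u ≤ T ω}).toReal)
    (hcause₂ : ∀ ψ : ℝ → ℝ, Measurable ψ → (∃ Mψ : ℝ, ∀ u : ℝ, |ψ u| ≤ Mψ) →
      (∫ ω, (if J ω = 2 then ψ (T ω) else 0) ∂μ) =
        ∫ u in Set.Ici (0 : ℝ), ψ u * α₂ u * (μ {ω | u ≤ T ω}).toReal)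
    (φ₁ φ₂ : ℝ → ℝ) (hφ₁_meas : Measurable φ₁) (hφ₂_meas : Measurable φ₂)
    (M₁ M₂ : ℝ) (hφ₁_bdd : ∀ u : ℝ, |φ₁ u| ≤ M₁) (hφ₂_bdd : ∀ u : ℝ, |φ₂ u| ≤ M₂) :
    (∫ ω,
        ((if J ω = 1 then φ₁ (T ω) else 0) -
            ∫ u in Set.Icc (0 : ℝ) (T ω), φ₁ u * α₁ u) *
        ((if J ω = 2 then φ₂ (T ω) else 0) -
            ∫ u in Set.Icc (0 : ℝ) (T ω), φ₂ u * α₂ u) ∂μ) = 0 := by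
  have hJ (j : ℕ) : MeasurableSet {ω | J ω = j} := hJmeas (measurableSet_singleton j)
  have hdisj : Disjoint {ω | J ω = 1} {ω | J ω = 2} :=
    disjoint_left.2 fun ω (h₁ : J ω = 1) (h₂ : J ω = 2) => by omega
  have h₁ : HasCauseSpecificHazard μ T {ω | J ω = 1} α₁ :=
    .of_integral_ite_eq (hJ 1) hTmeas hα₁_meas hα₁_nonneg
      (integrableOn_Icc_left_of_add hα₁_meas hα₁_nonneg hα₂_nonneg hα_int) hcause₁
  have h₂ : HasCauseSpecificHazard μ T {ω | J ω = 2} α₂ :=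
    .of_integral_ite_eq (hJ 2) hTmeas hα₂_meas hα₂_nonneg
      (integrableOn_Icc_left_of_add hα₂_meas hα₂_nonneg hα₁_nonneg
        (by simpa only [add_comm] using hα_int)) hcause₂
  simpa [hazardMartingale, primitive, indicator_apply] using
    competing_risks_martingales_orthogonal_general hTmeas (hJ 1) (hJ 2) hdisj h₁ h₂
      hφ₁_meas hφ₂_meas hφ₁_bdd hφ₂_bdd
end
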